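/- For every integer k ≥ 2, the graph A_k satisfies Ψ(L(A_k)) = ⌈log₂(1 + k)⌉ = ⌈log₂(1 + Δ(A_k))⌉, where Ψ(L(A_k)) is the minimum cardinality of a doubly resolving set of the line graph L(A_k). -/

import Mathlib

open SimpleGraph

variable {V : Type*}

/-- `S` is a doubly resolving set of `G`: every pair of distinct vertices is doubly
resolved by some pair of vertices of `S`. -/
def IsDoublyResolvingSet (G : SimpleGraph V) (S : Set V) : Prop :=
  ∀ u v : V, u ≠ v → ∃ x ∈ S, ∃ y ∈ S,
    (G.dist u x : ℤ) - (G.dist u y : ℤ) ≠ (G.dist v x : ℤ) - (G.dist v y : ℤ)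

/-- `Ψ(G)`: the minimum cardinality of a doubly resolving set of `G`. -/
noncomputable def psi (G : SimpleGraph V) : ℕ :=
  sInf {n | ∃ S : Set V, IsDoublyResolvingSet G S ∧ S.ncard = n}

/-- The degree of a vertex, as the cardinality of its neighbor set. -/
noncomputable def deg (G : SimpleGraph V) (v : V) : ℕ := (G.neighborSet v).ncard

/-- The maximum degree `Δ(G)`. -/
noncomputable def maxDeg (G : SimpleGraph V) : ℕ := sSup (Set.range (deg G))
/-- Number of pendant paths in `A_k`: `m = ⌈log₂ (1 + k)⌉`. -/
def akM (k : ℕ) : ℕ := Nat.clog 2 (1 + k)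

/-- The vertex set of the graph `A_k`:
`{u} ∪ {v_1, …, v_k} ∪ {w_0, …, w_{m-1}} ∪ {w'_0, …, w'_{m-1}}`. -/
abbrev AkVert (k : ℕ) : Type := (Unit ⊕ Fin k) ⊕ (Fin (akM k) ⊕ Fin (akM k))

/-- The vertex `u` of `A_k`. -/
def akU (k : ℕ) : AkVert k := Sum.inl (Sum.inl ())

/-- The vertex `v_{j+1}` of `A_k` (for `j : Fin k`, representing `v_1, …, v_k`). -/
def akV (k : ℕ) (j : Fin k) : AkVert k := Sum.inl (Sum.inr j)

/-- The vertex `w_i` of `A_k`. -/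
def akW (k : ℕ) (i : Fin (akM k)) : AkVert k := Sum.inr (Sum.inl i)

/-- The vertex `w'_i` of `A_k`. -/
def akW' (k : ℕ) (i : Fin (akM k)) : AkVert k := Sum.inr (Sum.inr i)

/-- The graph `A_k`: edges are `u v_j` for `1 ≤ j ≤ k`; `v_j w_i` whenever the `i`-th binary
digit of `j` is `0` (i.e. `⌊j / 2^i⌋ mod 2 = 0`, with `j` the 1-based label); and `w_i w'_i`
for `0 ≤ i ≤ m - 1`. -/
def akGraph (k : ℕ) : SimpleGraph (AkVert k) := SimpleGraph.fromRel (fun a b =>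
  (∃ j : Fin k, a = akU k ∧ b = akV k j) ∨
  (∃ (j : Fin k) (i : Fin (akM k)),
      a = akV k j ∧ b = akW k i ∧ ((j.val + 1) / 2 ^ i.val) % 2 = 0) ∨
  (∃ i : Fin (akM k), a = akW k i ∧ b = akW' k i))

/-!
A set `S` is doubly resolving iff no two distinct vertices have distance functions to `S` that
differ by a constant.

Lower bound. Distances from the vertices of a clique `K` to a fixed vertex differ by at most one, so
on `S` the distance from `a ∈ K` is the distance from `K` plus the indicator of the complement of
the set of those `x ∈ S` to which `a` is nearest among `K`. These subsets of `S` are distinct, and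
`∅` and `S` do not both occur, whence `|K| ≤ 2 ^ |S| - 1`. In a line graph, the edges at a vertex
form a clique.

Upper bound. The pendant edges `w_i w'_i` doubly resolve `L(A_k)`. At the `i`-th of them, the
distance of `u v_j` is `2` or `3` according to the `i`-th binary digit of `j`; that of `v_j w_i` is
`1`, that of `v_j w_l` with `l ≠ i` is `2` or at least `3` according to the same digit; and that of
`w_l w'_l` is `0` if `l = i` and at least `3` otherwise. As `j` has a nonzero digit, the only
pairs these values leave open are `v_j w_i` and `w_i w'_i`, and `v_j w_i` is no farther than
`w_i w'_i` from any other pendant edge.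
-/

section DoublyResolving

variable {G : SimpleGraph V} {S : Set V} {a b : V}

/-- The distances from `a` and from `b` to the vertices of `S` differ by a constant, i.e. no pair of
vertices of `S` doubly resolves `a` and `b`. -/
def IsDistTranslate (G : SimpleGraph V) (S : Set V) (a b : V) : Prop :=
  ∃ c : ℤ, ∀ x ∈ S, (G.dist a x : ℤ) = G.dist b x + c

lemma IsDistTranslate.symm (h : IsDistTranslate G S a b) : IsDistTranslate G S b a := by
  obtain ⟨c, hc⟩ := h
  exact ⟨-c, fun x hx ↦ by rw [hc x hx]; ring⟩

lemma isDoublyResolvingSet_iff_eq_of_isDistTranslate :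
    IsDoublyResolvingSet G S ↔ ∀ a b, IsDistTranslate G S a b → a = b := by
  refine forall₂_congr fun a b ↦ ⟨fun hres ⟨c, hc⟩ ↦ ?_, fun heq hne ↦ ?_⟩
  · by_contra hne
    obtain ⟨x, hx, y, hy, hxy⟩ := hres hne
    exact hxy (by rw [hc x hx, hc y hy]; ring)
  · by_contra! hxy
    rcases S.eq_empty_or_nonempty with rfl | ⟨y, hy⟩
    · exact hne (heq ⟨0, by simp⟩)
    · exact hne (heq ⟨G.dist a y - G.dist b y, fun x hx ↦ by linarith [hxy x hx y hy]⟩)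

lemma IsDoublyResolvingSet.nonempty [Nontrivial V] (hS : IsDoublyResolvingSet G S) :
    S.Nonempty := by
  obtain ⟨a, b, hab⟩ := exists_pair_ne V
  obtain ⟨x, hx, -⟩ := hS a b hab
  exact ⟨x, hx⟩

lemma psi_eq_ncard (hS : IsDoublyResolvingSet G S)
    (hmin : ∀ T, IsDoublyResolvingSet G T → S.ncard ≤ T.ncard) : psi G = S.ncard :=
  IsLeast.csInf_eq ⟨⟨S, hS, rfl⟩, by rintro _ ⟨T, hT, rfl⟩; exact hmin T hT⟩

end DoublyResolving

section Clique

variable {G : SimpleGraph V} {S K : Set V} {a b x : V}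

lemma dist_le_dist_add_one_of_isClique (hK : G.IsClique K) (ha : a ∈ K) (hb : b ∈ K) (x : V) :
    G.dist a x ≤ G.dist b x + 1 := by
  obtain rfl | hab := eq_or_ne a b
  · exact Nat.le_succ _
  · have hadj : G.Adj a b := hK ha hb hab
    have := hadj.reachable.dist_triangle_left x
    rw [dist_eq_one_iff_adj.2 hadj] at this
    omega

/-- The vertices of `S` to which no vertex of `K` is closer than `a`. If `K` is a clique containing
`a`, every other vertex of `S` is farther from `a` than from `K` by exactly one. -/
def nearestSet (G : SimpleGraph V) (K S : Set V) (a : V) : Set V :=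
  {x ∈ S | ∀ b ∈ K, G.dist a x ≤ G.dist b x}

lemma nearestSet_subset : nearestSet G K S a ⊆ S := Set.sep_subset _ _

lemma exists_dist_lt_of_notMem_nearestSet (hx : x ∈ S) (ha : x ∉ nearestSet G K S a) :
    ∃ b ∈ K, G.dist b x < G.dist a x := by
  by_contra! hle
  exact ha ⟨hx, hle⟩

lemma dist_eq_dist_of_mem_nearestSet_iff (hK : G.IsClique K) (ha : a ∈ K) (hb : b ∈ K) (hx : x ∈ S)
    (hab : x ∈ nearestSet G K S a ↔ x ∈ nearestSet G K S b) : G.dist a x = G.dist b x := by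
  by_cases hxa : x ∈ nearestSet G K S a
  · exact le_antisymm (hxa.2 b hb) ((hab.1 hxa).2 a ha)
  · obtain ⟨c, hc, hca⟩ := exists_dist_lt_of_notMem_nearestSet hx hxa
    obtain ⟨d, hd, hdb⟩ := exists_dist_lt_of_notMem_nearestSet hx (mt hab.2 hxa)
    have := dist_le_dist_add_one_of_isClique hK ha hd x
    have := dist_le_dist_add_one_of_isClique hK hb hc x
    omega

lemma dist_eq_dist_add_one_of_mem_nearestSet (hK : G.IsClique K) (ha : a ∈ K) (hb : b ∈ K)
    (hxa : x ∉ nearestSet G K S a) (hxb : x ∈ nearestSet G K S b) :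
    G.dist a x = G.dist b x + 1 := by
  obtain ⟨c, hc, hca⟩ := exists_dist_lt_of_notMem_nearestSet hxb.1 hxa
  have := hxb.2 c hc
  have := dist_le_dist_add_one_of_isClique hK ha hb x
  omega

lemma isDistTranslate_of_nearestSet_eq (hK : G.IsClique K) (ha : a ∈ K) (hb : b ∈ K)
    (hab : nearestSet G K S a = nearestSet G K S b) : IsDistTranslate G S a b :=
  ⟨0, fun x hx ↦ by
    simp [dist_eq_dist_of_mem_nearestSet_iff hK ha hb hx (by rw [hab])]⟩

lemma isDistTranslate_of_nearestSet_eq_empty (hK : G.IsClique K) (ha : a ∈ K) (hb : b ∈ K)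
    (hNa : nearestSet G K S a = ∅) (hNb : nearestSet G K S b = S) : IsDistTranslate G S a b :=
  ⟨1, fun x hx ↦ by
    exact_mod_cast dist_eq_dist_add_one_of_mem_nearestSet hK ha hb (by simp [hNa]) (hNb ▸ hx)⟩

open Classical in
/-- `nearestSet` with the value `∅` replaced by `S`: for `a` in a clique `K`, both values mean that
the distance from `a` exceeds the distance from `K` by the same amount at all vertices of `S`. -/
noncomputable def nearestCode (G : SimpleGraph V) (K S : Set V) (a : V) : Set V :=
  if nearestSet G K S a = ∅ then S else nearestSet G K S a

lemma nearestCode_mem_powerset_diff (hS : S.Nonempty) : nearestCode G K S a ∈ 𝒫 S \ {∅} := by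
  unfold nearestCode
  split_ifs with hN
  · exact ⟨Set.mem_powerset subset_rfl, hS.ne_empty⟩
  · exact ⟨nearestSet_subset, hN⟩

lemma isDistTranslate_of_nearestCode_eq (hK : G.IsClique K) (ha : a ∈ K) (hb : b ∈ K)
    (hab : nearestCode G K S a = nearestCode G K S b) : IsDistTranslate G S a b := by
  unfold nearestCode at hab
  split_ifs at hab with hNa hNb hNb
  · exact isDistTranslate_of_nearestSet_eq hK ha hb (hNa.trans hNb.symm)
  · exact isDistTranslate_of_nearestSet_eq_empty hK ha hb hNa hab.symm
  · exact (isDistTranslate_of_nearestSet_eq_empty hK hb ha hNb hab).symm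
  · exact isDistTranslate_of_nearestSet_eq hK ha hb hab

lemma IsDoublyResolvingSet.one_add_ncard_le_two_pow (hS : IsDoublyResolvingSet G S)
    (hfin : S.Finite) (hK : G.IsClique K) (hKnt : K.Nontrivial) :
    1 + K.ncard ≤ 2 ^ S.ncard := by
  have : Nontrivial V := Set.nontrivial_of_nontrivial hKnt
  have hinj : Set.InjOn (nearestCode G K S) K := fun a ha b hb hab ↦
    isDoublyResolvingSet_iff_eq_of_isDistTranslate.1 hS a b
      (isDistTranslate_of_nearestCode_eq hK ha hb hab)
  have hcard : K.ncard ≤ (𝒫 S \ {∅}).ncard :=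
    Set.ncard_le_ncard_of_injOn _ (fun _ _ ↦ nearestCode_mem_powerset_diff hS.nonempty) hinj
      hfin.powerset.sdiff
  rw [Set.ncard_sdiff_singleton_of_mem (Set.empty_subset S), Set.ncard_powerset S hfin] at hcard
  have : 0 < 2 ^ S.ncard := by positivity
  omega

lemma dist_le_dist_of_isClique_neighborSet (hclique : G.IsClique (G.neighborSet a))
    (hab : G.Adj a b) (hax : a ≠ x) : G.dist b x ≤ G.dist a x := by
  by_cases hreach : G.Reachable a x
  · obtain ⟨p, hp⟩ := hreach.exists_walk_length_eq_dist
    cases p with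
    | nil => exact absurd rfl hax
    | cons hac q =>
      have := dist_le_dist_add_one_of_isClique hclique hab hac x
      have := dist_le q
      rw [Walk.length_cons] at hp
      omega
  · rw [dist_eq_zero_of_not_reachable fun h ↦ hreach (hab.reachable.trans h)]
    exact Nat.zero_le _

end Clique

section LineGraph

variable {G : SimpleGraph V} {e f : G.edgeSet} {a b v : V}

lemma lineGraph_reachable_of_mem (he : v ∈ e.1) (hf : v ∈ f.1) : G.lineGraph.Reachable e f := by
  obtain rfl | hef := eq_or_ne e f
  · exact Reachable.rfl
  · exact (lineGraph_adj_iff_exists.2 ⟨hef, v, he, hf⟩).reachable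

lemma lineGraph_reachable_of_reachable (hab : G.Reachable a b) (he : a ∈ e.1) (hf : b ∈ f.1) :
    G.lineGraph.Reachable e f := by
  obtain ⟨p⟩ := hab
  induction p generalizing e with
  | nil => exact lineGraph_reachable_of_mem he hf
  | @cons a c _ hac _ ih =>
    let g : G.edgeSet := ⟨s(a, c), hac⟩
    exact (lineGraph_reachable_of_mem (f := g) he (Sym2.mem_mk_left a c)).trans
      (ih (Sym2.mem_mk_right a c) hf)

lemma lineGraph_preconnected (hG : G.Preconnected) : G.lineGraph.Preconnected := fun e f ↦
  lineGraph_reachable_of_reachable (hG _ _) e.1.out_fst_mem f.1.out_fst_mem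

lemma lineGraph_dist_le_one_iff (hef : G.lineGraph.Reachable e f) :
    G.lineGraph.dist e f ≤ 1 ↔ ∃ v, v ∈ e.1 ∧ v ∈ f.1 := by
  rw [Nat.le_one_iff_eq_zero_or_eq_one, hef.dist_eq_zero_iff, dist_eq_one_iff_adj,
    lineGraph_adj_iff_exists]
  refine ⟨?_, fun hv ↦ (eq_or_ne e f).imp_right fun hne ↦ ⟨hne, hv⟩⟩
  rintro (rfl | ⟨-, hv⟩)
  · exact ⟨_, e.1.out_fst_mem, e.1.out_fst_mem⟩
  · exact hv

lemma lineGraph_dist_le_two_of_adj (hab : G.Adj a b) (he : a ∈ e.1) (hf : b ∈ f.1) :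
    G.lineGraph.dist e f ≤ 2 := by
  let g : G.edgeSet := ⟨s(a, b), hab⟩
  have hag : a ∈ g.1 := Sym2.mem_mk_left a b
  have hbg : b ∈ g.1 := Sym2.mem_mk_right a b
  have heg := lineGraph_reachable_of_mem he hag
  have hgf := lineGraph_reachable_of_mem hbg hf
  calc G.lineGraph.dist e f
      ≤ G.lineGraph.dist e g + G.lineGraph.dist g f := heg.dist_triangle_left f
    _ ≤ 1 + 1 := add_le_add ((lineGraph_dist_le_one_iff heg).2 ⟨a, he, hag⟩)
        ((lineGraph_dist_le_one_iff hgf).2 ⟨b, hbg, hf⟩)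

lemma two_lt_lineGraph_dist (hef : G.lineGraph.Reachable e f)
    (hfar : ∀ a ∈ e.1, ∀ b ∈ f.1, a ≠ b ∧ ¬ G.Adj a b) : 2 < G.lineGraph.dist e f := by
  have hdisj : ¬ ∃ v, v ∈ e.1 ∧ v ∈ f.1 := fun ⟨v, hve, hvf⟩ ↦ (hfar v hve v hvf).1 rfl
  suffices 2 < G.lineGraph.edist e f by
    rw [← hef.coe_dist_eq_edist] at this
    exact_mod_cast this
  refine two_lt_edist_iff.2 ⟨?_, fun h ↦ hdisj (lineGraph_adj_iff_exists.1 h).2, ?_⟩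
  · rintro rfl
    exact hdisj ⟨_, e.1.out_fst_mem, e.1.out_fst_mem⟩
  · rw [Set.eq_empty_iff_forall_notMem]
    rintro g ⟨heg, hfg⟩
    obtain ⟨-, a, hae, hag⟩ := lineGraph_adj_iff_exists.1 heg
    obtain ⟨-, b, hbf, hbg⟩ := lineGraph_adj_iff_exists.1 hfg
    obtain ⟨hab, hnadj⟩ := hfar a hae b hbf
    exact hnadj (G.adj_iff_exists_edge.2 ⟨hab, g.1, g.2, hag, hbg⟩)

lemma isClique_lineGraph_setOf_mem (v : V) : G.lineGraph.IsClique {e | v ∈ e.1} :=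
  fun _ he _ hf hne ↦ lineGraph_adj_iff_exists.2 ⟨hne, v, he, hf⟩

lemma ncard_setOf_mem_edgeSet (v : V) : {e : G.edgeSet | v ∈ e.1}.ncard = deg G v := by
  classical
  have himage : Subtype.val '' {e : G.edgeSet | v ∈ e.1} = G.incidenceSet v := by
    ext e
    simp [incidenceSet, and_comm]
  rw [← Set.ncard_image_of_injective _ Subtype.val_injective, himage]
  exact Nat.card_congr (G.incidenceSetEquivNeighborSet v)

lemma IsDoublyResolvingSet.clog_one_add_deg_le_ncard {S : Set G.edgeSet}
    (hS : IsDoublyResolvingSet G.lineGraph S) (hfin : S.Finite) (hv : 2 ≤ deg G v) :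
    Nat.clog 2 (1 + deg G v) ≤ S.ncard := by
  rw [← ncard_setOf_mem_edgeSet] at hv ⊢
  exact Nat.clog_le_of_le_pow (hS.one_add_ncard_le_two_pow hfin (isClique_lineGraph_setOf_mem v)
    (Set.one_lt_ncard_iff_nontrivial_and_finite.1 hv).1)

end LineGraph

lemma eq_of_testBit_eq_of_lt_two_pow {a b n : ℕ} (ha : a < 2 ^ n) (hb : b < 2 ^ n)
    (h : ∀ i < n, a.testBit i = b.testBit i) : a = b := by
  refine Nat.eq_of_testBit_eq fun i ↦ ?_
  rcases lt_or_ge i n with hi | hi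
  · exact h i hi
  · have hpow : 2 ^ n ≤ 2 ^ i := Nat.pow_le_pow_right two_pos hi
    rw [Nat.testBit_lt_two_pow (ha.trans_le hpow), Nat.testBit_lt_two_pow (hb.trans_le hpow)]

lemma ncard_insert_image_le {α β : Type*} [Finite α] (f : α → β) (b : β) {s : Set α} {a : α}
    (ha : a ∉ s) : (insert b (f '' s)).ncard ≤ Nat.card α :=
  calc (insert b (f '' s)).ncard
      ≤ (f '' s).ncard + 1 := Set.ncard_insert_le _ _
    _ ≤ s.ncard + 1 := Nat.succ_le_succ Set.ncard_image_le
    _ ≤ Nat.card α := Set.ncard_lt_card ((Set.ne_univ_iff_exists_notMem s).2 ⟨a, ha⟩)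

section AkGraph

variable {k : ℕ} {i i' : Fin (akM k)} {j l : Fin k}

lemma neighborSet_akU : (akGraph k).neighborSet (akU k) = Set.range (akV k) := by
  ext x
  rcases x with (_ | _) | (_ | _) <;> simp [akGraph, akU, akV, akW, akW']

lemma neighborSet_akV (j : Fin k) : (akGraph k).neighborSet (akV k j) =
    insert (akU k) (akW k '' {i | (akGraph k).Adj (akV k j) (akW k i)}) := by
  ext x
  rcases x with (_ | _) | (_ | _) <;> simp [akGraph, akU, akV, akW, akW']

lemma neighborSet_akW (i : Fin (akM k)) : (akGraph k).neighborSet (akW k i) =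
    insert (akW' k i) (akV k '' {j | (akGraph k).Adj (akV k j) (akW k i)}) := by
  ext x
  rcases x with (_ | _) | (_ | _) <;> simp [akGraph, akU, akV, akW, akW', eq_comm]

lemma neighborSet_akW' (i : Fin (akM k)) : (akGraph k).neighborSet (akW' k i) = {akW k i} := by
  ext x
  rcases x with (_ | _) | (_ | _) <;> simp [akGraph, akU, akV, akW, akW', eq_comm]

lemma adj_akU_akV (j : Fin k) : (akGraph k).Adj (akU k) (akV k j) :=
  neighborSet_akU.ge ⟨j, rfl⟩

lemma adj_akW_akW' (i : Fin (akM k)) : (akGraph k).Adj (akW k i) (akW' k i) :=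
  (neighborSet_akW i).ge (Set.mem_insert _ _)

lemma adj_akV_akW_iff_testBit :
    (akGraph k).Adj (akV k j) (akW k i) ↔ (j.val + 1).testBit i = false := by
  simp [akGraph, akU, akV, akW, akW', Nat.testBit_eq_decide_div_mod_eq]

lemma val_add_one_lt_two_pow_akM (j : Fin k) : j.val + 1 < 2 ^ akM k := by
  have : 1 + k ≤ 2 ^ akM k := Nat.le_pow_clog one_lt_two (1 + k)
  omega

lemma eq_of_adj_akW_iff
    (h : ∀ i, (akGraph k).Adj (akV k j) (akW k i) ↔ (akGraph k).Adj (akV k l) (akW k i)) :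
    j = l := by
  simp only [adj_akV_akW_iff_testBit] at h
  have : j.val + 1 = l.val + 1 :=
    eq_of_testBit_eq_of_lt_two_pow (val_add_one_lt_two_pow_akM j) (val_add_one_lt_two_pow_akM l)
      fun i hi ↦ Bool.eq_iff_iff.2 (by simpa using not_congr (h ⟨i, hi⟩))
  exact Fin.ext (Nat.succ_injective this)

lemma exists_not_adj_akV_akW (j : Fin k) : ∃ i, ¬ (akGraph k).Adj (akV k j) (akW k i) := by
  simp only [adj_akV_akW_iff_testBit]
  by_contra! hzero
  have : j.val + 1 = 0 :=
    eq_of_testBit_eq_of_lt_two_pow (val_add_one_lt_two_pow_akM j) (by positivity)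
      fun i hi ↦ by simpa using hzero ⟨i, hi⟩
  exact Nat.succ_ne_zero _ this

lemma exists_not_adj_akW_akV (i : Fin (akM k)) : ∃ j, ¬ (akGraph k).Adj (akV k j) (akW k i) := by
  have hlt : 2 ^ i.val < 1 + k := Nat.pow_lt_of_lt_clog i.2
  have hpos : 0 < 2 ^ i.val := by positivity
  refine ⟨⟨2 ^ i.val - 1, by omega⟩, ?_⟩
  simp [adj_akV_akW_iff_testBit, Nat.sub_add_cancel hpos, Nat.testBit_two_pow_self]

lemma exists_adj_akV_akW (hk : 2 ≤ k) (i : Fin (akM k)) :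
    ∃ j, (akGraph k).Adj (akV k j) (akW k i) := by
  simp only [adj_akV_akW_iff_testBit]
  by_cases hi : i.val = 0
  · exact ⟨⟨1, hk⟩, by simp [hi]⟩
  · exact ⟨⟨0, by omega⟩, Nat.testBit_lt_two_pow (by simpa using Nat.one_lt_two_pow hi)⟩

lemma two_le_akM (hk : 2 ≤ k) : 2 ≤ akM k :=
  (Nat.lt_clog_iff_pow_lt one_lt_two).2 (by omega)

lemma akM_le : akM k ≤ k :=
  Nat.clog_le_of_le_pow (by have := Nat.lt_two_pow_self (n := k); omega)

lemma deg_akU : deg (akGraph k) (akU k) = k := by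
  have hinj : Function.Injective (akV k) := Sum.inl_injective.comp Sum.inr_injective
  rw [deg, neighborSet_akU, ← Set.image_univ, Set.ncard_image_of_injective _ hinj,
    Set.ncard_univ, Nat.card_fin]

lemma deg_akGraph_le (x : AkVert k) : deg (akGraph k) x ≤ k := by
  rcases x with (_ | j) | (i | i)
  · exact deg_akU.le
  · obtain ⟨i, hi⟩ := exists_not_adj_akV_akW j
    change ((akGraph k).neighborSet (akV k j)).ncard ≤ k
    rw [neighborSet_akV]
    exact (ncard_insert_image_le (akW k) _ hi).trans ((Nat.card_fin _).trans_le akM_le)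
  · obtain ⟨j, hj⟩ := exists_not_adj_akW_akV i
    change ((akGraph k).neighborSet (akW k i)).ncard ≤ k
    rw [neighborSet_akW]
    exact (ncard_insert_image_le (akV k) _ hj).trans (Nat.card_fin _).le
  · change ((akGraph k).neighborSet (akW' k i)).ncard ≤ k
    rw [neighborSet_akW', Set.ncard_singleton]
    exact i.pos.trans_le akM_le

lemma maxDeg_akGraph : maxDeg (akGraph k) = k :=
  IsGreatest.csSup_eq
    ⟨⟨akU k, deg_akU⟩, by rintro _ ⟨x, rfl⟩; exact deg_akGraph_le x⟩

lemma akGraph_preconnected (hk : 2 ≤ k) : (akGraph k).Preconnected := by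
  have hV (j) : (akGraph k).Reachable (akU k) (akV k j) := (adj_akU_akV j).reachable
  have hW (i) : (akGraph k).Reachable (akU k) (akW k i) := by
    obtain ⟨j, hj⟩ := exists_adj_akV_akW hk i
    exact (hV j).trans hj.reachable
  have hU (x) : (akGraph k).Reachable (akU k) x := by
    rcases x with (_ | j) | (i | i)
    · exact Reachable.rfl
    · exact hV j
    · exact hW i
    · exact (hW i).trans (adj_akW_akW' i).reachable
  exact fun x y ↦ (hU x).symm.trans (hU y)

/-- The edge `u v_{j+1}` of `A_k`. -/
def akEdgeUV (j : Fin k) : (akGraph k).edgeSet := ⟨s(akU k, akV k j), adj_akU_akV j⟩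

/-- The edge `v_{j+1} w_i` of `A_k`. -/
def akEdgeVW (h : (akGraph k).Adj (akV k j) (akW k i)) : (akGraph k).edgeSet :=
  ⟨s(akV k j, akW k i), h⟩

/-- The pendant edge `w_i w'_i` of `A_k`; these edges form the doubly resolving set of `L(A_k)`. -/
def akPendant (i : Fin (akM k)) : (akGraph k).edgeSet := ⟨s(akW k i, akW' k i), adj_akW_akW' i⟩

lemma akGraph_edge_cases (e : (akGraph k).edgeSet) :
    (∃ j, e = akEdgeUV j) ∨
      (∃ (j : Fin k) (i : Fin (akM k)) (h : (akGraph k).Adj (akV k j) (akW k i)), e = akEdgeVW h) ∨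
      ∃ i, e = akPendant i := by
  obtain ⟨⟨a, b⟩, hab⟩ := e
  have hadj : (akGraph k).Adj a b := hab
  rcases (fromRel_adj _ _ _).1 hadj with ⟨-, (⟨j, rfl, rfl⟩ | ⟨j, i, rfl, rfl, -⟩ | ⟨i, rfl, rfl⟩) |
    (⟨j, rfl, rfl⟩ | ⟨j, i, rfl, rfl, -⟩ | ⟨i, rfl, rfl⟩)⟩
  · exact .inl ⟨j, rfl⟩
  · exact .inr (.inl ⟨j, i, hadj, rfl⟩)
  · exact .inr (.inr ⟨i, rfl⟩)
  · exact .inl ⟨j, Subtype.ext Sym2.eq_swap⟩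
  · exact .inr (.inl ⟨j, i, hadj.symm, Subtype.ext Sym2.eq_swap⟩)
  · exact .inr (.inr ⟨i, Subtype.ext Sym2.eq_swap⟩)

lemma akPendant_injective : Function.Injective (akPendant (k := k)) := fun i i' h ↦ by
  simpa [akPendant, akW, akW'] using congrArg Subtype.val h

/-- The distance in `L(A_k)` from the edge `e` to the pendant edge `w_i w'_i`. -/
noncomputable def pendantDist (e : (akGraph k).edgeSet) (i : Fin (akM k)) : ℕ :=
  (akGraph k).lineGraph.dist e (akPendant i)

lemma akW_mem_of_akW'_mem {e : (akGraph k).edgeSet} (he : akW' k i ∈ e.1) : akW k i ∈ e.1 := by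
  obtain ⟨j, rfl⟩ | ⟨j, i', h, rfl⟩ | ⟨i', rfl⟩ := akGraph_edge_cases e <;>
    simp_all [akEdgeUV, akEdgeVW, akPendant, akU, akV, akW, akW']

lemma pendantDist_le_one_iff (hk : 2 ≤ k) {e : (akGraph k).edgeSet} :
    pendantDist e i ≤ 1 ↔ akW k i ∈ e.1 := by
  rw [pendantDist,
    lineGraph_dist_le_one_iff (lineGraph_preconnected (akGraph_preconnected hk) _ _)]
  refine ⟨?_, fun he ↦ ⟨_, he, Sym2.mem_mk_left _ _⟩⟩
  rintro ⟨a, hae, ha⟩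
  obtain rfl | rfl := Sym2.mem_iff.1 ha
  · exact hae
  · exact akW_mem_of_akW'_mem hae

lemma pendantDist_le_two_iff (hk : 2 ≤ k) {e : (akGraph k).edgeSet} :
    pendantDist e i ≤ 2 ↔ ∃ a ∈ e.1, a = akW k i ∨ (akGraph k).Adj a (akW k i) := by
  refine ⟨fun hle ↦ ?_, ?_⟩
  · by_contra! hfar
    refine (two_lt_lineGraph_dist (lineGraph_preconnected (akGraph_preconnected hk) _ _)
      fun a ha b hb ↦ ?_).not_ge hle
    obtain rfl | rfl := Sym2.mem_iff.1 hb
    · exact hfar a ha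
    · exact ⟨fun h ↦ (hfar a ha).2 (h ▸ (adj_akW_akW' i).symm),
        fun h ↦ (hfar a ha).1 ((neighborSet_akW' i).le h.symm)⟩
  · rintro ⟨a, hae, rfl | hadj⟩
    · exact ((pendantDist_le_one_iff hk).2 hae).trans one_le_two
    · exact lineGraph_dist_le_two_of_adj hadj hae (Sym2.mem_mk_left _ _)

lemma one_lt_pendantDist_akEdgeUV (hk : 2 ≤ k) (j : Fin k) (i : Fin (akM k)) :
    1 < pendantDist (akEdgeUV j) i := by
  rw [← not_le, pendantDist_le_one_iff hk]
  simp [akEdgeUV, akU, akV, akW]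

lemma pendantDist_akEdgeUV_le_two_iff (hk : 2 ≤ k) :
    pendantDist (akEdgeUV j) i ≤ 2 ↔ (akGraph k).Adj (akV k j) (akW k i) := by
  rw [pendantDist_le_two_iff hk]
  simp [akEdgeUV, akGraph, akU, akV, akW, akW']

lemma pendantDist_akEdgeUV_le_three (hk : 2 ≤ k) (j : Fin k) (i : Fin (akM k)) :
    pendantDist (akEdgeUV j) i ≤ 3 := by
  obtain ⟨l, hl⟩ := exists_adj_akV_akW hk i
  calc pendantDist (akEdgeUV j) i
      ≤ pendantDist (akEdgeUV l) i + 1 :=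
        dist_le_dist_add_one_of_isClique (isClique_lineGraph_setOf_mem (akU k))
          (Sym2.mem_mk_left _ _) (Sym2.mem_mk_left _ _) _
    _ ≤ 3 := Nat.succ_le_succ ((pendantDist_akEdgeUV_le_two_iff hk).2 hl)

lemma pendantDist_akEdgeVW_self (h : (akGraph k).Adj (akV k j) (akW k i)) :
    pendantDist (akEdgeVW h) i = 1 :=
  dist_eq_one_iff_adj.2 <| lineGraph_adj_iff_exists.2
    ⟨by simp [akEdgeVW, akPendant, akV, akW, akW'], akW k i, Sym2.mem_mk_right _ _,
      Sym2.mem_mk_left _ _⟩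

lemma one_lt_pendantDist_akEdgeVW (hk : 2 ≤ k) (h : (akGraph k).Adj (akV k j) (akW k i))
    (hne : i ≠ i') : 1 < pendantDist (akEdgeVW h) i' := by
  rw [← not_le, pendantDist_le_one_iff hk]
  simpa [akEdgeVW, akV, akW] using hne.symm

lemma pendantDist_akEdgeVW_le_two_iff (hk : 2 ≤ k) (h : (akGraph k).Adj (akV k j) (akW k i)) :
    pendantDist (akEdgeVW h) i' ≤ 2 ↔ (akGraph k).Adj (akV k j) (akW k i') := by
  have hWW : ¬ (akGraph k).Adj (akW k i) (akW k i') := by simp [akGraph, akV, akW, akW']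
  have hVW : akV k j ≠ akW k i' := by simp [akV, akW]
  have hW : akW k i = akW k i' → (akGraph k).Adj (akV k j) (akW k i') := fun hii' ↦ hii' ▸ h
  simp only [pendantDist_le_two_iff hk, akEdgeVW, Sym2.mem_iff, exists_eq_or_imp, exists_eq_left]
  tauto

lemma pendantDist_akPendant_self (i : Fin (akM k)) : pendantDist (akPendant i) i = 0 :=
  dist_self

lemma two_lt_pendantDist_akPendant (hk : 2 ≤ k) (hne : i ≠ i') :
    2 < pendantDist (akPendant i) i' := by
  rw [← not_le, pendantDist_le_two_iff hk]
  simpa [akPendant, akGraph, akU, akV, akW, akW'] using hne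

lemma isClique_neighborSet_akPendant (i : Fin (akM k)) :
    (akGraph k).lineGraph.IsClique ((akGraph k).lineGraph.neighborSet (akPendant i)) := by
  refine (isClique_lineGraph_setOf_mem (akW k i)).subset fun e he ↦ ?_
  obtain ⟨-, a, ha, hae⟩ := lineGraph_adj_iff_exists.1 he
  obtain rfl | rfl := Sym2.mem_iff.1 ha
  · exact hae
  · exact akW_mem_of_akW'_mem hae

lemma pendantDist_akEdgeVW_le_pendantDist_akPendant
    (h : (akGraph k).Adj (akV k j) (akW k i)) (hne : i ≠ i') :
    pendantDist (akEdgeVW h) i' ≤ pendantDist (akPendant i) i' :=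
  dist_le_dist_of_isClique_neighborSet (isClique_neighborSet_akPendant i)
    (dist_eq_one_iff_adj.1 (pendantDist_akEdgeVW_self h)).symm (akPendant_injective.ne hne)

lemma isDistTranslate_range_akPendant_iff {e f : (akGraph k).edgeSet} :
    IsDistTranslate (akGraph k).lineGraph (Set.range akPendant) e f ↔
      ∃ c : ℤ, ∀ i, (pendantDist e i : ℤ) = pendantDist f i + c :=
  exists_congr fun _ ↦ Set.forall_mem_range

lemma akEdgeUV_eq_of_isDistTranslate (hk : 2 ≤ k)
    (h : IsDistTranslate (akGraph k).lineGraph (Set.range akPendant) (akEdgeUV j) (akEdgeUV l)) :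
    akEdgeUV j = akEdgeUV l := by
  obtain ⟨c, hc⟩ := isDistTranslate_range_akPendant_iff.1 h
  have two_lt {j i} := not_congr (pendantDist_akEdgeUV_le_two_iff (j := j) (i := i) hk)
  have hc₀ : c = 0 := by
    obtain ⟨i, hi⟩ := exists_not_adj_akV_akW j
    obtain ⟨i', hi'⟩ := exists_not_adj_akV_akW l
    have := two_lt.2 hi
    have := two_lt.2 hi'
    have := pendantDist_akEdgeUV_le_three hk l i
    have := pendantDist_akEdgeUV_le_three hk j i'
    have := hc i
    have := hc i'
    omega
  refine congrArg akEdgeUV (eq_of_adj_akW_iff fun i ↦ ?_)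
  have := hc i
  rw [← pendantDist_akEdgeUV_le_two_iff hk, ← pendantDist_akEdgeUV_le_two_iff hk]
  omega

lemma not_isDistTranslate_akEdgeUV_akEdgeVW (hk : 2 ≤ k)
    (h : (akGraph k).Adj (akV k l) (akW k i)) :
    ¬ IsDistTranslate (akGraph k).lineGraph (Set.range akPendant) (akEdgeUV j) (akEdgeVW h) := by
  rw [isDistTranslate_range_akPendant_iff]
  rintro ⟨c, hc⟩
  obtain ⟨i', hi'⟩ := exists_not_adj_akV_akW l
  have := pendantDist_akEdgeVW_self h
  have := mt (pendantDist_akEdgeVW_le_two_iff hk h).1 hi'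
  have := one_lt_pendantDist_akEdgeUV hk j i
  have := pendantDist_akEdgeUV_le_three hk j i'
  have := hc i
  have := hc i'
  omega

lemma exists_ne_akM_index (hk : 2 ≤ k) (i : Fin (akM k)) : ∃ i', i ≠ i' := by
  have : Nontrivial (Fin (akM k)) := Fin.nontrivial_iff_two_le.2 (two_le_akM hk)
  exact (exists_ne i).imp fun _ ↦ Ne.symm

lemma not_isDistTranslate_akEdgeUV_akPendant (hk : 2 ≤ k) :
    ¬ IsDistTranslate (akGraph k).lineGraph (Set.range akPendant) (akEdgeUV j) (akPendant i) := by
  rw [isDistTranslate_range_akPendant_iff]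
  rintro ⟨c, hc⟩
  obtain ⟨i', hi'⟩ := exists_ne_akM_index hk i
  have := pendantDist_akPendant_self i
  have := two_lt_pendantDist_akPendant hk hi'
  have := one_lt_pendantDist_akEdgeUV hk j i
  have := pendantDist_akEdgeUV_le_three hk j i'
  have := hc i
  have := hc i'
  omega

lemma akEdgeVW_eq_of_isDistTranslate (hk : 2 ≤ k) (h : (akGraph k).Adj (akV k j) (akW k i))
    (h' : (akGraph k).Adj (akV k l) (akW k i'))
    (htrans : IsDistTranslate (akGraph k).lineGraph (Set.range akPendant)
      (akEdgeVW h) (akEdgeVW h')) :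
    akEdgeVW h = akEdgeVW h' := by
  obtain ⟨c, hc⟩ := isDistTranslate_range_akPendant_iff.1 htrans
  have hself := pendantDist_akEdgeVW_self h
  have hself' := pendantDist_akEdgeVW_self h'
  have hci := hc i
  obtain rfl : i = i' := by
    by_contra hne
    have := one_lt_pendantDist_akEdgeVW hk h hne
    have := one_lt_pendantDist_akEdgeVW hk h' (Ne.symm hne)
    have := hc i'
    omega
  obtain rfl : j = l := eq_of_adj_akW_iff fun i₀ ↦ by
    have := hc i₀
    rw [← pendantDist_akEdgeVW_le_two_iff hk h, ← pendantDist_akEdgeVW_le_two_iff hk h']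
    omega
  rfl

lemma not_isDistTranslate_akEdgeVW_akPendant (hk : 2 ≤ k)
    (h : (akGraph k).Adj (akV k j) (akW k i)) :
    ¬ IsDistTranslate (akGraph k).lineGraph (Set.range akPendant) (akEdgeVW h) (akPendant i') := by
  rw [isDistTranslate_range_akPendant_iff]
  rintro ⟨c, hc⟩
  have hself := pendantDist_akEdgeVW_self h
  have hself' := pendantDist_akPendant_self i'
  have hci := hc i
  obtain rfl | hne := eq_or_ne i i'
  · obtain ⟨i₀, hi₀⟩ := exists_ne_akM_index hk i
    have := pendantDist_akEdgeVW_le_pendantDist_akPendant h hi₀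
    have := hc i₀
    omega
  · have := one_lt_pendantDist_akEdgeVW hk h hne
    have := two_lt_pendantDist_akPendant hk hne.symm
    have := hc i'
    omega

lemma akPendant_eq_of_isDistTranslate (hk : 2 ≤ k)
    (h : IsDistTranslate (akGraph k).lineGraph (Set.range akPendant)
      (akPendant i) (akPendant i')) :
    akPendant i = akPendant i' := by
  obtain ⟨c, hc⟩ := isDistTranslate_range_akPendant_iff.1 h
  by_contra hne
  have hii' : i ≠ i' := fun hii' ↦ hne (congrArg akPendant hii')
  have := pendantDist_akPendant_self i
  have := pendantDist_akPendant_self i'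
  have := two_lt_pendantDist_akPendant hk hii'
  have := two_lt_pendantDist_akPendant hk hii'.symm
  have := hc i
  have := hc i'
  omega

lemma isDoublyResolvingSet_range_akPendant (hk : 2 ≤ k) :
    IsDoublyResolvingSet (akGraph k).lineGraph (Set.range akPendant) := by
  refine isDoublyResolvingSet_iff_eq_of_isDistTranslate.2 fun e f hef ↦ ?_
  obtain ⟨j, rfl⟩ | ⟨j, i, h, rfl⟩ | ⟨i, rfl⟩ := akGraph_edge_cases e <;>
    obtain ⟨l, rfl⟩ | ⟨l, i', h', rfl⟩ | ⟨i', rfl⟩ := akGraph_edge_cases f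
  · exact akEdgeUV_eq_of_isDistTranslate hk hef
  · exact (not_isDistTranslate_akEdgeUV_akEdgeVW hk h' hef).elim
  · exact (not_isDistTranslate_akEdgeUV_akPendant hk hef).elim
  · exact (not_isDistTranslate_akEdgeUV_akEdgeVW hk h hef.symm).elim
  · exact akEdgeVW_eq_of_isDistTranslate hk h h' hef
  · exact (not_isDistTranslate_akEdgeVW_akPendant hk h hef).elim
  · exact (not_isDistTranslate_akEdgeUV_akPendant hk hef.symm).elim
  · exact (not_isDistTranslate_akEdgeVW_akPendant hk h' hef.symm).elim
  · exact akPendant_eq_of_isDistTranslate hk hef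

lemma ncard_range_akPendant : (Set.range (akPendant (k := k))).ncard = Nat.clog 2 (1 + k) := by
  rw [← Set.image_univ, Set.ncard_image_of_injective _ akPendant_injective, Set.ncard_univ,
    Nat.card_fin, akM]

end AkGraph

/-- For every integer `k ≥ 2`,
`Ψ(L(A_k)) = ⌈log₂ (1 + k)⌉ = ⌈log₂ (1 + Δ(A_k))⌉`. -/
theorem psi_lineGraph_akGraph (k : ℕ) (hk : 2 ≤ k) :
    psi (akGraph k).lineGraph = Nat.clog 2 (1 + k) ∧
      Nat.clog 2 (1 + k) = Nat.clog 2 (1 + maxDeg (akGraph k)) := by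
  constructor
  · rw [← ncard_range_akPendant]
    refine psi_eq_ncard (isDoublyResolvingSet_range_akPendant hk) fun T hT ↦ ?_
    have hlower := hT.clog_one_add_deg_le_ncard T.toFinite (v := akU k) (by rwa [deg_akU])
    rwa [deg_akU, ← ncard_range_akPendant] at hlower
  · rw [maxDeg_akGraph]
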